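/- arXiv:2112.09927 — 5 statements merged into one kernel-verified Lean document; each statement's English description precedes it below -/
import Mathlib

section
/- Fix m ∈ ℕ, T > 0 and an infinitely differentiable function u₀ : ℝ → ℝ. Define u(t,x) = Σ_{j=0}^{m} C_j^{(m)} t^j u₀^{(j)}(x+t). Then u satisfies the singular hyperbolic equation ∂_t² u(t,x) − ∂_x² u(t,x) + (1/(2t)) (∂_t u(t,x) − (4m+1) ∂_x u(t,x)) = 0 for all (t,x) ∈ (0,T] × ℝ, together with the Cauchy data u(0,x) = u₀(x) and ∂_t u(0,x) = (4m+1) u₀'(x) for all x ∈ ℝ (the data being attained as limits as t → 0⁺ of u(t,x) and ∂_t u(t,x)). -/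
open Set Filter

/-!
Write `u(t, x) = (p(t∂) u₀)(x + t)` with `p = ∑ j, C_j Xʲ`. Under `p ↦ p(t∂)`, differentiating `u`
in `x` replaces `u₀` by `u₀'`, differentiating in `t` also replaces `p` by `p + p'`, and multiplying
by `t` trades one derivative of `u₀` for a factor `X` of `p`. The partial differential equation thus
becomes the ordinary differential equation `X (p'' + 2 p') + p' / 2 = 2 m p`, which is Kummer's
equation for `p = ₁F₁(-m; 1/2; -2X)`; on coefficients it is the two-term recurrence of the `C_j`.
-/

section

open scoped Polynomial Topology
open Polynomial (X derivative monomial)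

variable {E : Type*} [NormedAddCommGroup E] [NormedSpace ℝ E]

/-- The value at `x + t` of `p(t∂) f`, where `∂` is differentiation: the monomial `a Xʲ` is sent to
`a tʲ f⁽ʲ⁾(x + t)`. It is bundled as a linear map in the symbol `p`. -/
noncomputable def travelingWave (f : ℝ → E) (t x : ℝ) : ℝ[X] →ₗ[ℝ] E :=
  Polynomial.lsum fun j => LinearMap.toSpanSingleton ℝ E (t ^ j • iteratedDeriv j f (x + t))

section travelingWave

variable {f : ℝ → E} {p : ℝ[X]} {d : ℕ}

theorem travelingWave_monomial (f : ℝ → E) (t x : ℝ) (j : ℕ) (a : ℝ) :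
    travelingWave f t x (monomial j a) = (a * t ^ j) • iteratedDeriv j f (x + t) := by
  simp [travelingWave, Polynomial.sum_monomial_index, mul_smul]

theorem travelingWave_X_mul (f : ℝ → E) (t x : ℝ) (p : ℝ[X]) :
    travelingWave f t x (X * p) = t • travelingWave (deriv f) t x p := by
  induction p using Polynomial.induction_on' with
  | add p q hp hq => rw [mul_add, map_add, map_add, hp, hq, smul_add]
  | monomial j a =>
    rw [Polynomial.X_mul_monomial, travelingWave_monomial, travelingWave_monomial,
      iteratedDeriv_succ', smul_smul]
    ring_nf

theorem travelingWave_zero_left (f : ℝ → E) (x : ℝ) (p : ℝ[X]) :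
    travelingWave f 0 x p = p.coeff 0 • f x := by
  induction p using Polynomial.induction_on' with
  | add p q hp hq => rw [map_add, hp, hq, Polynomial.coeff_add, add_smul]
  | monomial j a =>
    rw [travelingWave_monomial]
    cases j <;> simp [Polynomial.coeff_monomial]

theorem hasDerivAt_iteratedDeriv_of_contDiff {j : ℕ} (hf : ContDiff ℝ (d + 1) f) (hj : j ≤ d)
    (y : ℝ) :
    HasDerivAt (iteratedDeriv j f) (iteratedDeriv j (deriv f) y) y := by
  rw [← iteratedDeriv_succ', iteratedDeriv_succ]
  exact (hf.differentiable_iteratedDeriv j (by exact_mod_cast Nat.lt_succ_of_le hj) y).hasDerivAt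

theorem hasDerivAt_travelingWave_space (hf : ContDiff ℝ (d + 1) f) (hp : p.natDegree ≤ d)
    (t x : ℝ) :
    HasDerivAt (fun y => travelingWave f t y p) (travelingWave (deriv f) t x p) x := by
  rw [p.as_sum_range' (d + 1) (by omega)]
  simp only [map_sum, travelingWave_monomial]
  refine HasDerivAt.fun_sum fun j hj => HasDerivAt.fun_const_smul _ ?_
  exact (hasDerivAt_iteratedDeriv_of_contDiff hf (Finset.mem_range_succ_iff.1 hj) _).comp_add_const
    x t

theorem hasDerivAt_travelingWave_time_monomial {j : ℕ} (hf : ContDiff ℝ (d + 1) f)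
    (hj : j ≤ d) (a t x : ℝ) :
    HasDerivAt (fun s => travelingWave f s x (monomial j a))
      (travelingWave (deriv f) t x (monomial j a + derivative (monomial j a))) t := by
  have hshift : HasDerivAt (fun s => iteratedDeriv j f (x + s))
      (iteratedDeriv j (deriv f) (x + t)) t :=
    (hasDerivAt_iteratedDeriv_of_contDiff hf hj _).comp_const_add x t
  have hcoeff : HasDerivAt (fun s => a * s ^ j) (a * (j * t ^ (j - 1))) t :=
    (hasDerivAt_pow j t).const_mul a
  simp only [Polynomial.derivative_monomial, map_add, travelingWave_monomial]
  convert hcoeff.fun_smul hshift using 2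
  cases j <;> simp [iteratedDeriv_succ', mul_assoc]

theorem hasDerivAt_travelingWave_time (hf : ContDiff ℝ (d + 1) f) (hp : p.natDegree ≤ d)
    (t x : ℝ) :
    HasDerivAt (fun s => travelingWave f s x p)
      (travelingWave (deriv f) t x (p + derivative p)) t := by
  rw [p.as_sum_range' (d + 1) (by omega), map_sum, ← Finset.sum_add_distrib]
  simp only [map_sum]
  exact HasDerivAt.fun_sum fun j hj =>
    hasDerivAt_travelingWave_time_monomial hf (Finset.mem_range_succ_iff.1 hj) _ t x

theorem deriv_travelingWave_space (hf : ContDiff ℝ (d + 1) f) (hp : p.natDegree ≤ d) (t : ℝ) :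
    deriv (fun y => travelingWave f t y p) = fun x => travelingWave (deriv f) t x p :=
  funext fun x => (hasDerivAt_travelingWave_space hf hp t x).deriv

theorem deriv_travelingWave_time (hf : ContDiff ℝ (d + 1) f) (hp : p.natDegree ≤ d) (x : ℝ) :
    deriv (fun s => travelingWave f s x p) =
      fun t => travelingWave (deriv f) t x (p + derivative p) :=
  funext fun t => (hasDerivAt_travelingWave_time hf hp t x).deriv

theorem tendsto_travelingWave_zero (hf : ContDiff ℝ (d + 1) f) (hp : p.natDegree ≤ d) (x : ℝ) :
    Tendsto (fun t => travelingWave f t x p) (𝓝 0) (𝓝 (p.coeff 0 • f x)) := by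
  rw [← travelingWave_zero_left]
  exact (hasDerivAt_travelingWave_time hf hp 0 x).continuousAt

theorem natDegree_add_derivative_le (hp : p.natDegree ≤ d) : (p + derivative p).natDegree ≤ d :=
  Polynomial.natDegree_add_le_of_degree_le hp
    ((Polynomial.natDegree_derivative_le p).trans (by omega))

theorem tendsto_deriv_travelingWave_time_zero (hf : ContDiff ℝ (d + 1 + 1) f)
    (hp : p.natDegree ≤ d) (x : ℝ) :
    Tendsto (deriv fun t => travelingWave f t x p) (𝓝 0)
      (𝓝 ((p.coeff 0 + p.coeff 1) • deriv f x)) := by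
  rw [deriv_travelingWave_time hf.of_succ hp]
  simpa [Polynomial.coeff_derivative] using tendsto_travelingWave_zero
    hf.deriv' (natDegree_add_derivative_le hp) x

theorem iteratedDeriv_two_travelingWave_space (hf : ContDiff ℝ (d + 1 + 1) f)
    (hp : p.natDegree ≤ d) (t x : ℝ) :
    iteratedDeriv 2 (fun y => travelingWave f t y p) x =
      travelingWave (deriv (deriv f)) t x p := by
  rw [iteratedDeriv_succ, iteratedDeriv_one, deriv_travelingWave_space hf.of_succ hp,
    deriv_travelingWave_space hf.deriv' hp]

theorem iteratedDeriv_two_travelingWave_time (hf : ContDiff ℝ (d + 1 + 1) f)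
    (hp : p.natDegree ≤ d) (t x : ℝ) :
    iteratedDeriv 2 (fun s => travelingWave f s x p) t =
      travelingWave (deriv (deriv f)) t x
        (p + derivative p + derivative (p + derivative p)) := by
  rw [iteratedDeriv_succ, iteratedDeriv_one, deriv_travelingWave_time hf.of_succ hp,
    deriv_travelingWave_time hf.deriv' (natDegree_add_derivative_le hp)]

theorem travelingWave_singular_hyperbolic (hf : ContDiff ℝ (d + 1 + 1) f) (hp : p.natDegree ≤ d)
    {b c : ℝ}
    (hode : X * (derivative (derivative p) + (2 : ℝ) • derivative p) + b • derivative p = c • p)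
    {t : ℝ} (ht : t ≠ 0) (x : ℝ) :
    iteratedDeriv 2 (fun s => travelingWave f s x p) t
        - iteratedDeriv 2 (fun y => travelingWave f t y p) x
        + t⁻¹ • (b • deriv (fun s => travelingWave f s x p) t
          - (b + c) • deriv (fun y => travelingWave f t y p) x) = 0 := by
  have hX : ∀ q, travelingWave (deriv (deriv f)) t x q =
      t⁻¹ • travelingWave (deriv f) t x (X * q) := fun q => by
    rw [travelingWave_X_mul, inv_smul_smul₀ ht]
  rw [iteratedDeriv_two_travelingWave_time hf hp, iteratedDeriv_two_travelingWave_space hf hp,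
    deriv_travelingWave_time hf.of_succ hp, deriv_travelingWave_space hf.of_succ hp, ← map_sub, hX]
  simp only [← map_smul, ← map_sub, ← smul_add, ← map_add]
  suffices hsymbol : X * (p + derivative p + derivative (p + derivative p) - p)
      + (b • (p + derivative p) - (b + c) • p) = 0 by rw [hsymbol, smul_zero, map_zero]
  simp only [Polynomial.smul_eq_C_mul, map_add, map_ofNat] at hode ⊢
  linear_combination hode

end travelingWave

/-- The coefficients of Kummer's confluent hypergeometric polynomial `₁F₁(-m; b; -2X)`, written with
falling factorials; the coefficients `C_j^{(m)}` are the case `b = 1 / 2`. -/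
noncomputable def kummerCoeff (b : ℝ) (m j : ℕ) : ℝ :=
  (-2 : ℝ) ^ j / (Nat.factorial j : ℝ) *
    ((∏ i ∈ Finset.range j, ((m : ℝ) - i)) / ∏ i ∈ Finset.range j, (-b - i))

/-- Kummer's confluent hypergeometric polynomial `₁F₁(-m; b; -2X)`. -/
noncomputable def kummerPoly (b : ℝ) (m : ℕ) : ℝ[X] :=
  ∑ j ∈ Finset.range (m + 1), monomial j (kummerCoeff b m j)

section kummerPoly

variable {b : ℝ} {m : ℕ}

theorem kummerCoeff_zero (b : ℝ) (m : ℕ) : kummerCoeff b m 0 = 1 := by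
  simp [kummerCoeff]

theorem kummerCoeff_succ (hb : ∀ i : ℕ, b + i ≠ 0) (m j : ℕ) :
    (j + 1) * (b + j) * kummerCoeff b m (j + 1) = 2 * (m - j) * kummerCoeff b m j := by
  have hfactor (i : ℕ) : -b - i ≠ 0 := neg_add' b (i : ℝ) ▸ neg_ne_zero.2 (hb i)
  have hprod : ∏ i ∈ Finset.range j, (-b - i) ≠ 0 := Finset.prod_ne_zero_iff.2 fun i _ => hfactor i
  have hlast := hfactor j
  simp only [kummerCoeff, Finset.prod_range_succ, Nat.factorial_succ, Nat.cast_mul, Nat.cast_succ,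
    pow_succ]
  field_simp
  ring

theorem kummerCoeff_one (b : ℝ) (m : ℕ) : kummerCoeff b m 1 = 2 * m / b := by
  simp [kummerCoeff, div_neg, mul_div_assoc]

theorem kummerCoeff_eq_zero {j : ℕ} (hj : m < j) : kummerCoeff b m j = 0 := by
  have hprod : ∏ i ∈ Finset.range j, ((m : ℝ) - i) = 0 :=
    Finset.prod_eq_zero (Finset.mem_range.2 hj) (sub_self _)
  rw [kummerCoeff, hprod, zero_div, mul_zero]

theorem coeff_kummerPoly (b : ℝ) (m j : ℕ) : (kummerPoly b m).coeff j = kummerCoeff b m j := by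
  simp only [kummerPoly, Polynomial.finsetSum_coeff, Polynomial.coeff_monomial,
    Finset.sum_ite_eq', Finset.mem_range, ite_eq_left_iff, not_lt]
  exact fun hj => (kummerCoeff_eq_zero hj).symm

theorem natDegree_kummerPoly_le (b : ℝ) (m : ℕ) : (kummerPoly b m).natDegree ≤ m :=
  Polynomial.natDegree_le_iff_coeff_eq_zero.2 fun j hj => by
    rw [coeff_kummerPoly, kummerCoeff_eq_zero hj]

theorem kummerPoly_ode (hb : ∀ i : ℕ, b + i ≠ 0) (m : ℕ) :
    X * (derivative (derivative (kummerPoly b m)) + (2 : ℝ) • derivative (kummerPoly b m))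
      + b • derivative (kummerPoly b m) = (2 * m : ℝ) • kummerPoly b m := by
  ext j
  have hrec := kummerCoeff_succ hb m j
  cases j with
  | zero =>
    simp only [Polynomial.coeff_add, Polynomial.mul_coeff_zero, Polynomial.coeff_X_zero,
      Polynomial.coeff_derivative, Polynomial.coeff_smul, coeff_kummerPoly, smul_eq_mul,
      Nat.cast_zero] at hrec ⊢
    linear_combination hrec
  | succ j =>
    simp only [Polynomial.coeff_add, Polynomial.coeff_X_mul, Polynomial.coeff_derivative,
      Polynomial.coeff_smul, coeff_kummerPoly, smul_eq_mul, Nat.cast_succ] at hrec ⊢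
    linear_combination hrec

theorem travelingWave_kummerPoly (f : ℝ → E) (t x : ℝ) :
    travelingWave f t x (kummerPoly b m) =
      ∑ j ∈ Finset.range (m + 1), (kummerCoeff b m j * t ^ j) • iteratedDeriv j f (x + t) := by
  simp only [kummerPoly, map_sum, travelingWave_monomial]

end kummerPoly

theorem stmt0_general (m : ℕ) {b : ℝ} (hb : ∀ i : ℕ, b + i ≠ 0) (u₀ : ℝ → E)
    (hu₀ : ContDiff ℝ (m + 2) u₀) (u : ℝ → ℝ → E)
    (hu : ∀ t x : ℝ, u t x = ∑ j ∈ Finset.range (m + 1),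
      (kummerCoeff b m j * t ^ j) • iteratedDeriv j u₀ (x + t)) :
    (∀ t ≠ 0, ∀ x : ℝ,
      iteratedDeriv 2 (fun s => u s x) t - iteratedDeriv 2 (fun y => u t y) x
        + t⁻¹ • (b • deriv (fun s => u s x) t - (b + 2 * m) • deriv (fun y => u t y) x) = 0) ∧
    (∀ x : ℝ, Tendsto (fun t => u t x) (𝓝 0) (𝓝 (u₀ x))) ∧
    (∀ x : ℝ, Tendsto (fun t => deriv (fun s => u s x) t) (𝓝 0)
      (𝓝 ((1 + 2 * m / b) • deriv u₀ x))) := by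
  obtain rfl : u = fun t x => travelingWave u₀ t x (kummerPoly b m) := by
    ext t x
    rw [hu, travelingWave_kummerPoly]
  have hdeg := natDegree_kummerPoly_le b m
  replace hu₀ : ContDiff ℝ (m + 1 + 1) u₀ := by rwa [add_assoc, one_add_one_eq_two]
  refine ⟨fun t ht x => travelingWave_singular_hyperbolic hu₀ hdeg (kummerPoly_ode hb m) ht x,
    fun x => ?_, fun x => ?_⟩
  · simpa [coeff_kummerPoly, kummerCoeff_zero] using
      tendsto_travelingWave_zero hu₀.of_succ hdeg x
  · simpa only [coeff_kummerPoly, kummerCoeff_zero, kummerCoeff_one] using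
      tendsto_deriv_travelingWave_time_zero hu₀ hdeg x

end

/-- For `m ∈ ℕ`, `T > 0` and a smooth `u₀ : ℝ → ℝ`, the function
`u(t,x) = ∑_{j=0}^{m} C_j^{(m)} t^j u₀^{(j)}(x+t)`, where
`C_j^{(m)} = ((−2)^j / j!) · (m)_j / (−1/2)_j` (falling factorials), solves the singular
hyperbolic equation `∂_t² u − ∂_x² u + (1/(2t))(∂_t u − (4m+1)∂_x u) = 0` on `(0,T] × ℝ`,
with Cauchy data `u(0,x) = u₀(x)`, `∂_t u(0,x) = (4m+1) u₀'(x)` attained as limits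
as `t → 0⁺`. -/
theorem stmt0 (m : ℕ) (T : ℝ) (hT : 0 < T) (u₀ : ℝ → ℝ) (hu₀ : ContDiff ℝ (⊤ : ℕ∞) u₀)
    (Cc : ℕ → ℝ)
    (hCc : ∀ j : ℕ, Cc j = ((-2 : ℝ) ^ j / (Nat.factorial j : ℝ)) *
      ((∏ i ∈ Finset.range j, ((m : ℝ) - i)) / (∏ i ∈ Finset.range j, ((-1 : ℝ) / 2 - i))))
    (u : ℝ → ℝ → ℝ)
    (hu : ∀ t x : ℝ, u t x = ∑ j ∈ Finset.range (m + 1),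
      Cc j * t ^ j * iteratedDeriv j u₀ (x + t)) :
    (∀ t ∈ Ioc (0 : ℝ) T, ∀ x : ℝ,
      iteratedDeriv 2 (fun s => u s x) t - iteratedDeriv 2 (fun y => u t y) x
        + (1 / (2 * t)) * (deriv (fun s => u s x) t
            - (4 * (m : ℝ) + 1) * deriv (fun y => u t y) x) = 0) ∧
    (∀ x : ℝ, Tendsto (fun t => u t x) (nhdsWithin 0 (Ioi 0)) (nhds (u₀ x))) ∧
    (∀ x : ℝ, Tendsto (fun t => deriv (fun s => u s x) t) (nhdsWithin 0 (Ioi 0))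
      (nhds ((4 * (m : ℝ) + 1) * deriv u₀ x))) := by
  obtain rfl : Cc = kummerCoeff (1 / 2) m :=
    funext fun j => by simp only [hCc, kummerCoeff, neg_div]
  obtain ⟨hpde, hvalue, hvelocity⟩ :=
    stmt0_general m (fun i => by positivity) u₀ (contDiff_infty.1 hu₀ (m + 2)) u hu
  refine ⟨fun t ht x => ?_, fun x => (hvalue x).mono_left nhdsWithin_le_nhds, fun x => ?_⟩
  · rw [← hpde t ht.1.ne' x]
    simp only [smul_eq_mul]
    ring
  · convert (hvelocity x).mono_left nhdsWithin_le_nhds using 2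
    rw [smul_eq_mul]
    ring
end

section
/- Fix T > 0 and an infinitely differentiable function u₀ : ℝ → ℝ. Define u(t,x) = t · u₀(x+t). Then u satisfies ∂_t² u(t,x) − ∂_x² u(t,x) − (2/t) ∂_x u(t,x) = 0 for all (t,x) ∈ (0,T] × ℝ, together with the Cauchy data u(0,x) = 0 and ∂_t u(0,x) = u₀(x) for all x ∈ ℝ (the data being attained as limits as t → 0⁺ of u(t,x) and ∂_t u(t,x)). In particular, for this singular lower-order coefficient 2/t, which is not L¹-integrable on (0,T], the solution exhibits no loss of regularity. -/
open Set Filter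

/-!
Factor `∂_t² − ∂_x² = (∂_t + ∂_x)(∂_t − ∂_x)`. The operator `∂_t − ∂_x` annihilates every function
of `x + t`, so applied to `u = t·f(x + t)` it only differentiates the factor `t` and leaves
`f(x + t)`. Then `∂_t + ∂_x` turns this into `2 f'(x + t)`, which is `(2/t) ∂_x u`: the singular
coefficient is exactly compensated by the zero of `u` at `t = 0`.
-/

section

variable {𝕜 F : Type*} [NontriviallyNormedField 𝕜] [NormedAddCommGroup F] [NormedSpace 𝕜 F]
  {f : 𝕜 → F} {x t : 𝕜}

theorem hasDerivAt_id_smul_comp_const_add {f' : F} (hf : HasDerivAt f f' (x + t)) :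
    HasDerivAt (fun s => s • f (x + s)) (f (x + t) + t • f') t := by
  simpa only [one_smul, add_comm] using (hasDerivAt_id' t).fun_smul (hf.comp_const_add x t)

theorem deriv_id_smul_comp_const_add (hf : Differentiable 𝕜 f) :
    deriv (fun s => s • f (x + s)) = fun s => f (x + s) + s • deriv f (x + s) :=
  funext fun s => (hasDerivAt_id_smul_comp_const_add (hf (x + s)).hasDerivAt).deriv

theorem iteratedDeriv_two_id_smul_comp_const_add (hf : Differentiable 𝕜 f)
    (hf' : DifferentiableAt 𝕜 (deriv f) (x + t)) :
    iteratedDeriv 2 (fun s => s • f (x + s)) t =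
      (2 : 𝕜) • deriv f (x + t) + t • iteratedDeriv 2 f (x + t) := by
  have hderiv := ((hf (x + t)).hasDerivAt.comp_const_add x t).fun_add
    (hasDerivAt_id_smul_comp_const_add hf'.hasDerivAt)
  simp only [iteratedDeriv_succ, iteratedDeriv_zero]
  rw [deriv_id_smul_comp_const_add hf, hderiv.deriv, two_smul, add_assoc]

theorem iteratedDeriv_const_smul_comp_add_const (n : ℕ) (f : 𝕜 → F) (c a x : 𝕜) :
    iteratedDeriv n (fun y => c • f (y + a)) x = c • iteratedDeriv n f (x + a) := by
  rw [iteratedDeriv_fun_const_smul_field, iteratedDeriv_comp_add_const]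

theorem iteratedDeriv_two_sub_iteratedDeriv_two_id_smul_comp_add (hf : Differentiable 𝕜 f)
    (hf' : DifferentiableAt 𝕜 (deriv f) (x + t)) :
    iteratedDeriv 2 (fun s => s • f (x + s)) t - iteratedDeriv 2 (fun y => t • f (y + t)) x =
      (2 : 𝕜) • deriv f (x + t) := by
  rw [iteratedDeriv_two_id_smul_comp_const_add hf hf', iteratedDeriv_const_smul_comp_add_const,
    add_sub_cancel_right]

theorem tendsto_id_smul_comp_const_add (hf : ContinuousAt f x) :
    Tendsto (fun t => t • f (x + t)) (nhds 0) (nhds 0) := by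
  have hshift : Tendsto (fun t => x + t) (nhds 0) (nhds x) :=
    (continuous_const_add x).tendsto' 0 x (add_zero x)
  simpa only [id, Function.comp_apply, zero_smul] using tendsto_id.smul (hf.tendsto.comp hshift)

theorem tendsto_deriv_id_smul_comp_const_add (hf : Differentiable 𝕜 f)
    (hf' : ContinuousAt (deriv f) x) :
    Tendsto (deriv fun s => s • f (x + s)) (nhds 0) (nhds (f x)) := by
  have hvalue : Tendsto (fun t => f (x + t)) (nhds 0) (nhds (f x)) :=
    (hf.continuous.comp (continuous_const_add x)).tendsto' 0 (f x) (by simp)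
  rw [deriv_id_smul_comp_const_add hf]
  simpa only [add_zero] using hvalue.add (tendsto_id_smul_comp_const_add hf')

theorem stmt1_general (hf : Differentiable 𝕜 f) (hf' : Differentiable 𝕜 (deriv f))
    (u : 𝕜 → 𝕜 → F) (hu : ∀ t x, u t x = t • f (x + t)) :
    (∀ t ≠ 0, ∀ x,
      iteratedDeriv 2 (fun s => u s x) t - iteratedDeriv 2 (fun y => u t y) x
        - (2 / t) • deriv (fun y => u t y) x = 0) ∧
    (∀ x, Tendsto (fun t => u t x) (nhds 0) (nhds 0)) ∧
    (∀ x, Tendsto (fun t => deriv (fun s => u s x) t) (nhds 0) (nhds (f x))) := by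
  simp only [hu]
  refine ⟨fun t ht x => ?_, fun x => tendsto_id_smul_comp_const_add hf.continuous.continuousAt,
    fun x => tendsto_deriv_id_smul_comp_const_add hf hf'.continuous.continuousAt⟩
  have hspace : deriv (fun y => t • f (y + t)) x = t • deriv f (x + t) := by
    simpa only [iteratedDeriv_one] using iteratedDeriv_const_smul_comp_add_const 1 f t t x
  rw [iteratedDeriv_two_sub_iteratedDeriv_two_id_smul_comp_add hf (hf' _), hspace, smul_smul,
    div_mul_cancel₀ _ ht, sub_self]

end

/-- For `T > 0` and a smooth `u₀ : ℝ → ℝ`, the function `u(t,x) = t·u₀(x+t)`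
solves `∂_t² u − ∂_x² u − (2/t) ∂_x u = 0` on `(0,T] × ℝ` with Cauchy data `u(0,x) = 0`,
`∂_t u(0,x) = u₀(x)` attained as limits as `t → 0⁺`: no loss of regularity occurs even
though the lower-order coefficient `2/t` is not `L¹`-integrable on `(0,T]`. -/
theorem stmt1 (T : ℝ) (hT : 0 < T) (u₀ : ℝ → ℝ) (hu₀ : ContDiff ℝ (⊤ : ℕ∞) u₀)
    (u : ℝ → ℝ → ℝ) (hu : ∀ t x : ℝ, u t x = t * u₀ (x + t)) :
    (∀ t ∈ Ioc (0 : ℝ) T, ∀ x : ℝ,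
      iteratedDeriv 2 (fun s => u s x) t - iteratedDeriv 2 (fun y => u t y) x
        - (2 / t) * deriv (fun y => u t y) x = 0) ∧
    (∀ x : ℝ, Tendsto (fun t => u t x) (nhdsWithin 0 (Ioi 0)) (nhds 0)) ∧
    (∀ x : ℝ, Tendsto (fun t => deriv (fun s => u s x) t) (nhdsWithin 0 (Ioi 0))
      (nhds (u₀ x))) := by
  obtain ⟨hpde, hval, hder⟩ := stmt1_general (hu₀.differentiable (by simp))
    ((contDiff_infty_iff_deriv.1 hu₀).2.differentiable (by simp)) u hu
  exact ⟨fun t ht => hpde t ht.1.ne', fun x => (hval x).mono_left nhdsWithin_le_nhds,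
    fun x => (hder x).mono_left nhdsWithin_le_nhds⟩
end

section
/- Fix T > 0 and an infinitely differentiable function u₀ : ℝ → ℝ. Define u(t,x) = t² · u₀(x+t). Then u satisfies ∂_t² u(t,x) − ∂_x² u(t,x) − (1/t)(∂_t u(t,x) + 3 ∂_x u(t,x)) = 0 for all (t,x) ∈ (0,T] × ℝ, together with the zero Cauchy data u(0,x) = 0 and ∂_t u(0,x) = 0 for all x ∈ ℝ (the data being attained as limits as t → 0⁺ of u(t,x) and ∂_t u(t,x)). -/
open Set Filter

/-!
For a product `w(t, x) = φ(t) f(x + t)` the terms in `φ f''` cancel in the wave operator, which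
leaves `∂_t² w - ∂_x² w = φ'' f + 2 φ' f'`. If `φ` is homogeneous of degree `a`, so that
`t φ' = a φ` and `t φ'' = (a - 1) φ'`, then this equals `t⁻¹ ((a - 1) ∂_t w + (a + 1) ∂_x w)`;
the coefficients `1` and `3` belong to `a = 2`. For `φ(t) = t ^ k` with `2 ≤ k` both `φ` and `φ'`
vanish at `0`, and hence so do the Cauchy data.
-/

section ModulatedWave

variable {𝕜 E : Type*} [NontriviallyNormedField 𝕜] [NormedAddCommGroup E] [NormedSpace 𝕜 E]

/-- The wave with profile `f` travelling to the left at unit speed, its amplitude modulated in time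
by `φ`. Time is the first variable and space the second. -/
def modulatedWave (φ : 𝕜 → 𝕜) (f : 𝕜 → E) (t x : 𝕜) : E :=
  φ t • f (x + t)

variable {φ : 𝕜 → 𝕜} {f : 𝕜 → E} {t x : 𝕜}

theorem differentiableAt_modulatedWave_time (hφ : DifferentiableAt 𝕜 φ t)
    (hf : DifferentiableAt 𝕜 f (x + t)) :
    DifferentiableAt 𝕜 (fun s => modulatedWave φ f s x) t :=
  hφ.smul (hf.hasDerivAt.comp_const_add x t).differentiableAt

theorem deriv_modulatedWave_time (hφ : DifferentiableAt 𝕜 φ t)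
    (hf : DifferentiableAt 𝕜 f (x + t)) :
    deriv (fun s => modulatedWave φ f s x) t =
      modulatedWave φ (deriv f) t x + modulatedWave (deriv φ) f t x :=
  (hφ.hasDerivAt.smul (hf.hasDerivAt.comp_const_add x t)).deriv

theorem iteratedDeriv_modulatedWave_space (φ : 𝕜 → 𝕜) (f : 𝕜 → E) (m : ℕ) (t x : 𝕜) :
    iteratedDeriv m (fun y => modulatedWave φ f t y) x =
      modulatedWave φ (iteratedDeriv m f) t x := by
  simp only [modulatedWave, iteratedDeriv_fun_const_smul_field, iteratedDeriv_comp_add_const]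

theorem deriv_modulatedWave_space (φ : 𝕜 → 𝕜) (f : 𝕜 → E) (t x : 𝕜) :
    deriv (fun y => modulatedWave φ f t y) x = modulatedWave φ (deriv f) t x := by
  simpa only [iteratedDeriv_one] using iteratedDeriv_modulatedWave_space φ f 1 t x

theorem iteratedDeriv_two_modulatedWave_time
    (hφ : Differentiable 𝕜 φ) (hφ' : Differentiable 𝕜 (deriv φ))
    (hf : Differentiable 𝕜 f) (hf' : Differentiable 𝕜 (deriv f)) (t x : 𝕜) :
    iteratedDeriv 2 (fun s => modulatedWave φ f s x) t =
      modulatedWave φ (deriv (deriv f)) t x + (2 : 𝕜) • modulatedWave (deriv φ) (deriv f) t x +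
        modulatedWave (deriv (deriv φ)) f t x := by
  have deriv_eq : deriv (fun s => modulatedWave φ f s x) =
      fun s => modulatedWave φ (deriv f) s x + modulatedWave (deriv φ) f s x :=
    funext fun s => deriv_modulatedWave_time (hφ s) (hf _)
  rw [iteratedDeriv_succ, iteratedDeriv_one, deriv_eq,
    deriv_fun_add (differentiableAt_modulatedWave_time (hφ t) (hf' _))
      (differentiableAt_modulatedWave_time (hφ' t) (hf _)),
    deriv_modulatedWave_time (hφ t) (hf' _), deriv_modulatedWave_time (hφ' t) (hf _)]
  module

theorem iteratedDeriv_two_time_sub_space_modulatedWave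
    (hφ : Differentiable 𝕜 φ) (hφ' : Differentiable 𝕜 (deriv φ))
    (hf : Differentiable 𝕜 f) (hf' : Differentiable 𝕜 (deriv f)) (t x : 𝕜) :
    iteratedDeriv 2 (fun s => modulatedWave φ f s x) t -
        iteratedDeriv 2 (fun y => modulatedWave φ f t y) x =
      (2 : 𝕜) • modulatedWave (deriv φ) (deriv f) t x + modulatedWave (deriv (deriv φ)) f t x := by
  rw [iteratedDeriv_two_modulatedWave_time hφ hφ' hf hf', iteratedDeriv_modulatedWave_space,
    iteratedDeriv_succ, iteratedDeriv_one]
  abel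

theorem modulatedWave_singular_wave_equation {a : 𝕜}
    (hφ : Differentiable 𝕜 φ) (hφ' : Differentiable 𝕜 (deriv φ))
    (hf : Differentiable 𝕜 f) (hf' : Differentiable 𝕜 (deriv f)) (ht : t ≠ 0)
    (euler : t * deriv φ t = a * φ t) (euler' : t * deriv (deriv φ) t = (a - 1) * deriv φ t) :
    iteratedDeriv 2 (fun s => modulatedWave φ f s x) t -
        iteratedDeriv 2 (fun y => modulatedWave φ f t y) x -
        (1 / t) • ((a - 1) • deriv (fun s => modulatedWave φ f s x) t +
          (a + 1) • deriv (fun y => modulatedWave φ f t y) x) = 0 := by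
  have deriv_φ : deriv φ t = a * φ t / t := by rw [eq_div_iff ht, mul_comm, euler]
  have deriv_deriv_φ : deriv (deriv φ) t = (a - 1) * deriv φ t / t := by
    rw [eq_div_iff ht, mul_comm, euler']
  rw [iteratedDeriv_two_time_sub_space_modulatedWave hφ hφ' hf hf',
    deriv_modulatedWave_time (hφ t) (hf _), deriv_modulatedWave_space]
  simp only [modulatedWave, deriv_deriv_φ, deriv_φ]
  module

theorem tendsto_modulatedWave_zero {t₀ : 𝕜} (hφ : ContinuousAt φ t₀) (hφ₀ : φ t₀ = 0)
    (hf : ContinuousAt f (x + t₀)) :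
    Tendsto (fun t => modulatedWave φ f t x) (nhds t₀) (nhds 0) := by
  have shift : ContinuousAt (fun t => f (x + t)) t₀ :=
    ContinuousAt.comp' hf (continuous_const_add x).continuousAt
  simpa only [modulatedWave, hφ₀, zero_smul] using Tendsto.smul hφ shift

theorem tendsto_deriv_modulatedWave_time_zero {t₀ : 𝕜}
    (hφ : Differentiable 𝕜 φ) (hφ' : ContinuousAt (deriv φ) t₀)
    (hφ₀ : φ t₀ = 0) (hφ'₀ : deriv φ t₀ = 0)
    (hf : Differentiable 𝕜 f) (hf' : ContinuousAt (deriv f) (x + t₀)) :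
    Tendsto (fun t => deriv (fun s => modulatedWave φ f s x) t) (nhds t₀) (nhds 0) := by
  simp only [deriv_modulatedWave_time (hφ _) (hf _)]
  simpa only [add_zero] using
    (tendsto_modulatedWave_zero (hφ t₀).continuousAt hφ₀ hf').add
      (tendsto_modulatedWave_zero hφ' hφ'₀ (hf _).continuousAt)

end ModulatedWave

section Power

variable {𝕜 : Type*} [NontriviallyNormedField 𝕜]

theorem mul_deriv_pow_eq (k : ℕ) (t : 𝕜) : t * deriv (fun s => s ^ k) t = k * t ^ k := by
  rw [deriv_pow_field]
  cases k with
  | zero => simp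
  | succ k => rw [Nat.add_sub_cancel]; ring

theorem differentiable_deriv_pow (k : ℕ) : Differentiable 𝕜 (deriv fun s : 𝕜 => s ^ k) :=
  (contDiff_id.pow k).differentiable_deriv_two

theorem mul_deriv_deriv_pow_eq (k : ℕ) (t : 𝕜) :
    t * deriv (deriv fun s => s ^ k) t = (k - 1) * deriv (fun s => s ^ k) t := by
  have deriv_eq : (deriv fun s : 𝕜 => s ^ k) = fun s => (k : 𝕜) * s ^ (k - 1) :=
    funext fun _ => deriv_pow_field k
  rw [deriv_eq, deriv_const_mul_field, mul_left_comm, mul_deriv_pow_eq]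
  cases k with
  | zero => simp
  | succ k => simp only [Nat.add_sub_cancel, Nat.cast_succ]; ring

theorem deriv_pow_zero_of_two_le {k : ℕ} (hk : 2 ≤ k) : deriv (fun s : 𝕜 => s ^ k) 0 = 0 := by
  rw [deriv_pow_field, zero_pow (by lia), mul_zero]

end Power

theorem stmt3_general {𝕜 E : Type*} [NontriviallyNormedField 𝕜] [NormedAddCommGroup E]
    [NormedSpace 𝕜 E] {k : ℕ} (hk : 2 ≤ k) {f : 𝕜 → E} (hf : Differentiable 𝕜 f)
    (hf' : Differentiable 𝕜 (deriv f)) {u : 𝕜 → 𝕜 → E} (hu : ∀ t x, u t x = t ^ k • f (x + t)) :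
    (∀ t ≠ 0, ∀ x,
      iteratedDeriv 2 (fun s => u s x) t - iteratedDeriv 2 (fun y => u t y) x -
        (1 / t) • (((k : 𝕜) - 1) • deriv (fun s => u s x) t +
          ((k : 𝕜) + 1) • deriv (fun y => u t y) x) = 0) ∧
    (∀ x, Tendsto (fun t => u t x) (nhds 0) (nhds 0)) ∧
    (∀ x, Tendsto (fun t => deriv (fun s => u s x) t) (nhds 0) (nhds 0)) := by
  obtain rfl : u = modulatedWave (fun t => t ^ k) f := funext₂ hu
  have hφ : Differentiable 𝕜 fun t : 𝕜 => t ^ k := differentiable_pow k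
  have hφ' : Differentiable 𝕜 (deriv fun t : 𝕜 => t ^ k) := differentiable_deriv_pow k
  have hφ₀ : (0 : 𝕜) ^ k = 0 := zero_pow (by lia)
  refine ⟨fun t ht x => ?wave_equation, fun x => ?initial_value, fun x => ?initial_velocity⟩
  case wave_equation =>
    exact modulatedWave_singular_wave_equation hφ hφ' hf hf' ht
      (mul_deriv_pow_eq k t) (mul_deriv_deriv_pow_eq k t)
  case initial_value =>
    exact tendsto_modulatedWave_zero hφ.continuous.continuousAt hφ₀ hf.continuous.continuousAt
  case initial_velocity =>
    exact tendsto_deriv_modulatedWave_time_zero hφ hφ'.continuous.continuousAt hφ₀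
      (deriv_pow_zero_of_two_le hk) hf hf'.continuous.continuousAt

/-- For `T > 0` and a smooth `u₀ : ℝ → ℝ`, the function `u(t,x) = t²·u₀(x+t)`
solves `∂_t² u − ∂_x² u − (1/t)(∂_t u + 3∂_x u) = 0` on `(0,T] × ℝ` with zero Cauchy data
`u(0,x) = 0`, `∂_t u(0,x) = 0` attained as limits as `t → 0⁺`. -/
theorem stmt3 (T : ℝ) (hT : 0 < T) (u₀ : ℝ → ℝ) (hu₀ : ContDiff ℝ (⊤ : ℕ∞) u₀)
    (u : ℝ → ℝ → ℝ) (hu : ∀ t x : ℝ, u t x = t ^ 2 * u₀ (x + t)) :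
    (∀ t ∈ Ioc (0 : ℝ) T, ∀ x : ℝ,
      iteratedDeriv 2 (fun s => u s x) t - iteratedDeriv 2 (fun y => u t y) x
        - (1 / t) * (deriv (fun s => u s x) t + 3 * deriv (fun y => u t y) x) = 0) ∧
    (∀ x : ℝ, Tendsto (fun t => u t x) (nhdsWithin 0 (Ioi 0)) (nhds 0)) ∧
    (∀ x : ℝ, Tendsto (fun t => deriv (fun s => u s x) t) (nhdsWithin 0 (Ioi 0))
      (nhds 0)) := by
  obtain ⟨equation, value, velocity⟩ := stmt3_general le_rfl (hu₀.differentiable (by simp))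
    (contDiff_infty.mp hu₀ 2).differentiable_deriv_two hu
  norm_num only [smul_eq_mul, one_mul] at equation
  exact ⟨fun t ht x => equation t ht.1.ne' x, fun x => (value x).mono_left nhdsWithin_le_nhds,
    fun x => (velocity x).mono_left nhdsWithin_le_nhds⟩
end

section
/- Let κ₁ ∈ [0,1] and κ₂ ∈ (0,1] with κ₁ ≤ κ₂, and define a(t,x) = ⟨x⟩^{2κ₁} (2 + cos(⟨x⟩^{1−κ₂})) · t^{−1/4} (2 + sin(t^{−1/8})) for (t,x) ∈ (0,1] × ℝ, where ⟨x⟩ = (1+x²)^{1/2}. Then for every β ∈ ℕ there exists a constant C_β > 0 such that for all (t,x) ∈ (0,1] × ℝ: |∂_x^β a(t,x)| ≤ C_β ⟨x⟩^{2κ₁ − κ₂ β} t^{−1/4} and |∂_x^β ∂_t a(t,x)| ≤ C_β ⟨x⟩^{2κ₁ − κ₂ β} t^{−11/8}. That is, a satisfies the singular-coefficient estimates with structure functions ω(x) = ⟨x⟩^{κ₁}, Φ(x) = ⟨x⟩^{κ₂} and singularity exponents p = 1/4, q = 11/8. -/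
open Set Filter Real

open Asymptotics

/-!
The coefficient is a product `f(x) τ(t)`. Smooth functions whose `n`-th derivative is `O(w / Φⁿ)`
form a symbol class that is multiplicative in the weight `w`, and it contains `cos ∘ g` with
weight `1` as soon as `g'` has weight `1 / Φ`. Powers `⟨x⟩^s` are symbols of weight `⟨x⟩^s` for
`Φ = ⟨x⟩`, so the phase `g = ⟨x⟩^{1-κ}` has a derivative of weight `⟨x⟩^{-κ}`, and `f` is a symbol
of weight `⟨x⟩^m` for `Φ = ⟨x⟩^κ`. In time, differentiating the oscillation `sin(t^{-r})` costs
`t^{-r-1}`, which for `t ≤ 1` dominates the `t^{-1}` lost from the amplitude `t^{-p}`.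
-/

/-- Membership in the symbol class of weight `w`, scale `Φ` and order `N`: `f` is of class `C^N` and
its derivatives of order `n ≤ N` are bounded by multiples of `w / Φ ^ n`. For `w = ω ^ 2` these are
the bounds in `x` of the singular-coefficient estimates. The order is kept finite so that closure
properties can be proved by induction on it; uniform bounds on `ℝ` are encoded as `=O` along the
filter `⊤`. -/
def IsSymbolUpTo (w Φ : ℝ → ℝ) (N : ℕ) (f : ℝ → ℝ) : Prop :=
  ContDiff ℝ N f ∧ ∀ n ≤ N, iteratedDeriv n f =O[⊤] (w / Φ ^ n)

section SymbolClass

variable {w v Φ Ψ f g : ℝ → ℝ} {N : ℕ}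

lemma isSymbolUpTo_zero_iff : IsSymbolUpTo w Φ 0 f ↔ Continuous f ∧ f =O[⊤] w := by
  simp [IsSymbolUpTo, contDiff_zero]

lemma isSymbolUpTo_succ_iff :
    IsSymbolUpTo w Φ (N + 1) f ↔
      Differentiable ℝ f ∧ f =O[⊤] w ∧ IsSymbolUpTo (w / Φ) Φ N (deriv f) := by
  have weight_succ (n : ℕ) : w / Φ / Φ ^ n = w / Φ ^ (n + 1) := by rw [div_div, pow_succ']
  have contDiff_iff : ContDiff ℝ (N + 1 : ℕ) f ↔ Differentiable ℝ f ∧ ContDiff ℝ N (deriv f) := by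
    simpa using contDiff_succ_iff_deriv (n := N) (f := f)
  have bounds_iff : (∀ n ≤ N + 1, iteratedDeriv n f =O[⊤] (w / Φ ^ n)) ↔
      f =O[⊤] w ∧ ∀ n ≤ N, iteratedDeriv n (deriv f) =O[⊤] (w / Φ / Φ ^ n) := by
    simp only [weight_succ, ← iteratedDeriv_succ', ← Nat.lt_succ_iff]
    rw [Nat.forall_lt_succ_left, pow_zero, div_one, iteratedDeriv_zero]
  rw [IsSymbolUpTo, contDiff_iff, bounds_iff, IsSymbolUpTo]
  tauto

namespace IsSymbolUpTo

lemma of_succ (hf : IsSymbolUpTo w Φ (N + 1) f) : IsSymbolUpTo w Φ N f :=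
  ⟨hf.1.of_le (by exact_mod_cast N.le_succ), fun n hn => hf.2 n (hn.trans N.le_succ)⟩

lemma mono (hf : IsSymbolUpTo w Φ N f) (hw : w =O[⊤] v) (hΦ : Ψ =O[⊤] Φ) (hΨ : ∀ x, Ψ x ≠ 0) :
    IsSymbolUpTo v Ψ N f := by
  refine ⟨hf.1, fun n hn => (hf.2 n hn).trans ?_⟩
  have inv_pow_isBigO : (Φ ^ n)⁻¹ =O[⊤] (Ψ ^ n)⁻¹ :=
    (hΦ.pow n).inv_rev (.of_forall fun x hx => absurd hx (pow_ne_zero n (hΨ x)))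
  simpa only [div_eq_mul_inv] using! hw.mul inv_pow_isBigO

lemma const (c : ℝ) : IsSymbolUpTo 1 Φ N fun _ => c := by
  refine ⟨contDiff_const, fun n _ => ?_⟩
  rcases n with _ | n
  · rw [iteratedDeriv_zero, pow_zero, div_one]
    exact isBigO_const_const c (one_ne_zero' ℝ) ⊤
  · exact (isBigO_zero _ _).congr_left fun x => by simp [iteratedDeriv_const]

lemma add (hf : IsSymbolUpTo w Φ N f) (hg : IsSymbolUpTo w Φ N g) : IsSymbolUpTo w Φ N (f + g) := by
  refine ⟨hf.1.add hg.1, fun n hn => ?_⟩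
  have hn' : (n : WithTop ℕ∞) ≤ N := by exact_mod_cast hn
  have iteratedDeriv_add_eq : iteratedDeriv n (f + g) = iteratedDeriv n f + iteratedDeriv n g :=
    funext fun x => iteratedDeriv_add (hf.1.of_le hn').contDiffAt (hg.1.of_le hn').contDiffAt
  rw [iteratedDeriv_add_eq]
  exact (hf.2 n hn).add (hg.2 n hn)

lemma mul (hf : IsSymbolUpTo w Φ N f) (hg : IsSymbolUpTo v Φ N g) :
    IsSymbolUpTo (w * v) Φ N (f * g) := by
  induction N generalizing w v f g with
  | zero =>
    rw [isSymbolUpTo_zero_iff] at *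
    exact ⟨hf.1.mul hg.1, hf.2.mul hg.2⟩
  | succ N ih =>
    obtain ⟨f_diff, f_bound, f'_symbol⟩ := isSymbolUpTo_succ_iff.1 hf
    obtain ⟨g_diff, g_bound, g'_symbol⟩ := isSymbolUpTo_succ_iff.1 hg
    refine isSymbolUpTo_succ_iff.2 ⟨f_diff.mul g_diff, f_bound.mul g_bound, ?_⟩
    have f'g_symbol : IsSymbolUpTo (w * v / Φ) Φ N (deriv f * g) := by
      simpa only [div_mul_eq_mul_div] using ih f'_symbol hg.of_succ
    have fg'_symbol : IsSymbolUpTo (w * v / Φ) Φ N (f * deriv g) := by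
      simpa only [mul_div_assoc] using ih hf.of_succ g'_symbol
    have deriv_mul_eq : deriv (f * g) = deriv f * g + f * deriv g :=
      funext fun x => deriv_mul (f_diff x) (g_diff x)
    exact deriv_mul_eq ▸ f'g_symbol.add fg'_symbol

lemma const_mul (c : ℝ) (hf : IsSymbolUpTo w Φ N f) : IsSymbolUpTo w Φ N fun x => c * f x := by
  simpa only [one_mul] using! (const c).mul hf

/-- The derivative of each function is `± g'` times the other, so the induction carries both. -/
lemma cos_comp_and_sin_comp (hg : Differentiable ℝ g) (hg' : IsSymbolUpTo Φ⁻¹ Φ N (deriv g)) :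
    IsSymbolUpTo 1 Φ N (fun x => cos (g x)) ∧ IsSymbolUpTo 1 Φ N (fun x => sin (g x)) := by
  have cos_bound : (fun x => cos (g x)) =O[⊤] (1 : ℝ → ℝ) :=
    isBigO_of_le _ fun x => by simpa using abs_cos_le_one (g x)
  have sin_bound : (fun x => sin (g x)) =O[⊤] (1 : ℝ → ℝ) :=
    isBigO_of_le _ fun x => by simpa using abs_sin_le_one (g x)
  induction N with
  | zero =>
    simp only [isSymbolUpTo_zero_iff]
    exact ⟨⟨hg.cos.continuous, cos_bound⟩, ⟨hg.sin.continuous, sin_bound⟩⟩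
  | succ N ih =>
    obtain ⟨cos_symbol, sin_symbol⟩ := ih hg'.of_succ
    have deriv_cos_eq : deriv (fun x => cos (g x)) = fun x => -1 * (deriv g x * sin (g x)) := by
      funext x; rw [(hg x).hasDerivAt.cos.deriv]; ring
    have deriv_sin_eq : deriv (fun x => sin (g x)) = fun x => deriv g x * cos (g x) := by
      funext x; rw [(hg x).hasDerivAt.sin.deriv]; ring
    simp only [isSymbolUpTo_succ_iff, deriv_cos_eq, deriv_sin_eq, one_div]
    refine ⟨⟨hg.cos, cos_bound, const_mul _ ?_⟩, ⟨hg.sin, sin_bound, ?_⟩⟩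
    · simpa only [mul_one] using! hg'.of_succ.mul sin_symbol
    · simpa only [mul_one] using! hg'.of_succ.mul cos_symbol

lemma exists_abs_iteratedDeriv_mul_const_le (hf : IsSymbolUpTo w Φ N f) :
    ∃ C > 0, ∀ c x, |iteratedDeriv N (fun y => f y * c) x| ≤ C * |w x / Φ x ^ N| * |c| := by
  obtain ⟨C, C_pos, hC⟩ := (hf.2 N le_rfl).exists_pos
  refine ⟨C, C_pos, fun c x => ?_⟩
  rw [show (fun y => f y * c) = fun y => c * f y from funext fun y => mul_comm _ _,
    iteratedDeriv_const_mul_field, mul_comm c, abs_mul]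
  exact mul_le_mul_of_nonneg_right (isBigOWith_top.1 hC x) (abs_nonneg c)

lemma exists_singular_bound_of_separable {a : ℝ → ℝ → ℝ} {τ : ℝ → ℝ} {p q : ℝ}
    (hf : IsSymbolUpTo w Φ N f) (ha : ∀ t > 0, ∀ x, a t x = f x * τ t)
    (hτ : τ =O[𝓟 (Ioc 0 1)] fun t => t ^ p) (hτ' : deriv τ =O[𝓟 (Ioc 0 1)] fun t => t ^ q) :
    ∃ C > 0, ∀ t ∈ Ioc (0 : ℝ) 1, ∀ x,
      |iteratedDeriv N (fun y => a t y) x| ≤ C * |w x / Φ x ^ N| * t ^ p ∧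
      |iteratedDeriv N (fun y => deriv (fun s => a s y) t) x| ≤ C * |w x / Φ x ^ N| * t ^ q := by
  obtain ⟨C, C_pos, hC⟩ := hf.exists_abs_iteratedDeriv_mul_const_le
  obtain ⟨A, A_pos, hA⟩ := hτ.exists_pos
  obtain ⟨B, hB⟩ := hτ'.isBigOWith
  refine ⟨C * max A B, by positivity, fun t ht x => ?_⟩
  have bound_of_abs_le (c r : ℝ) (hc : |c| ≤ max A B * t ^ r) :
      |iteratedDeriv N (fun y => f y * c) x| ≤ C * max A B * |w x / Φ x ^ N| * t ^ r :=
    calc _ ≤ C * |w x / Φ x ^ N| * |c| := hC c x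
      _ ≤ C * |w x / Φ x ^ N| * (max A B * t ^ r) := by gcongr
      _ = _ := by ring
  have norm_rpow_eq (r : ℝ) : ‖t ^ r‖ = t ^ r := norm_of_nonneg (rpow_nonneg ht.1.le r)
  have deriv_eq (y : ℝ) : deriv (fun s => a s y) t = f y * deriv τ t := by
    have a_eq : (fun s => a s y) =ᶠ[nhds t] fun s => f y * τ s :=
      (lt_mem_nhds ht.1).mono fun s hs => ha s hs y
    rw [a_eq.deriv_eq, deriv_const_mul_field]
  simp only [ha t ht.1, deriv_eq]
  have t_nonneg := ht.1.le
  constructor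
  · refine bound_of_abs_le _ _ ((isBigOWith_principal.1 hA t ht).trans ?_)
    rw [norm_rpow_eq]
    gcongr
    exact le_max_left A B
  · refine bound_of_abs_le _ _ ((isBigOWith_principal.1 hB t ht).trans ?_)
    rw [norm_rpow_eq]
    gcongr
    exact le_max_right A B

end IsSymbolUpTo

end SymbolClass

section JapaneseBracket

/-- The Japanese bracket `⟨x⟩ = (1 + x²)^{1/2}`. -/
noncomputable def japaneseBracket (x : ℝ) : ℝ := √(1 + x ^ 2)

lemma one_le_japaneseBracket (x : ℝ) : 1 ≤ japaneseBracket x :=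
  one_le_sqrt.2 (le_add_of_nonneg_right (sq_nonneg x))

lemma japaneseBracket_pos (x : ℝ) : 0 < japaneseBracket x :=
  one_pos.trans_le (one_le_japaneseBracket x)

lemma abs_le_japaneseBracket (x : ℝ) : |x| ≤ japaneseBracket x :=
  abs_le_sqrt (le_add_of_nonneg_left zero_le_one)

lemma hasDerivAt_japaneseBracket_rpow (s x : ℝ) :
    HasDerivAt (fun y => japaneseBracket y ^ s) (s * (x * japaneseBracket x ^ (s - 2))) x := by
  have hx := japaneseBracket_pos x
  have bracket_deriv : HasDerivAt japaneseBracket (x / japaneseBracket x) x := by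
    have inner_deriv : HasDerivAt (fun y : ℝ => 1 + y ^ 2) (2 * x) x := by
      simpa using (hasDerivAt_pow 2 x).const_add 1
    refine (inner_deriv.sqrt (by positivity)).congr_deriv ?_
    rw [japaneseBracket, mul_div_mul_left _ _ two_ne_zero]
  refine (bracket_deriv.rpow_const (p := s) (.inl hx.ne')).congr_deriv ?_
  rw [show s - 1 = s - 2 + 1 by ring, rpow_add_one hx.ne']
  field_simp

lemma japaneseBracket_rpow_isBigO {s r : ℝ} (h : s ≤ r) :
    (fun x => japaneseBracket x ^ s) =O[⊤] fun x => japaneseBracket x ^ r := by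
  refine isBigO_of_le _ fun x => ?_
  rw [norm_of_nonneg (rpow_nonneg (japaneseBracket_pos x).le s),
    norm_of_nonneg (rpow_nonneg (japaneseBracket_pos x).le r)]
  exact rpow_le_rpow_of_exponent_le (one_le_japaneseBracket x) h

lemma isSymbolUpTo_id_japaneseBracket (N : ℕ) :
    IsSymbolUpTo japaneseBracket japaneseBracket N fun x => x := by
  refine (isSymbolUpTo_succ_iff.2 ⟨differentiable_fun_id, ?_, ?_⟩).of_succ
  · exact isBigO_of_le _ fun x => (abs_le_japaneseBracket x).trans (le_abs_self _)
  · have bracket_div_self : japaneseBracket / japaneseBracket = 1 :=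
      funext fun x => div_self (japaneseBracket_pos x).ne'
    rw [bracket_div_self, deriv_id'']
    exact .const 1

lemma isSymbolUpTo_japaneseBracket_rpow (s : ℝ) (N : ℕ) :
    IsSymbolUpTo (fun x => japaneseBracket x ^ s) japaneseBracket N
      fun x => japaneseBracket x ^ s := by
  have rpow_diff (s : ℝ) : Differentiable ℝ fun x => japaneseBracket x ^ s := fun x =>
    (hasDerivAt_japaneseBracket_rpow s x).differentiableAt
  induction N generalizing s with
  | zero => exact isSymbolUpTo_zero_iff.2 ⟨(rpow_diff s).continuous, isBigO_refl _ _⟩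
  | succ N ih =>
    refine isSymbolUpTo_succ_iff.2 ⟨rpow_diff s, isBigO_refl _ _, ?_⟩
    have weight_eq : (fun x => japaneseBracket x ^ s) / japaneseBracket =
        japaneseBracket * fun x => japaneseBracket x ^ (s - 2) := by
      funext x
      have hx := japaneseBracket_pos x
      simp only [Pi.div_apply, Pi.mul_apply]
      rw [mul_comm, ← rpow_add_one hx.ne', ← rpow_sub_one hx.ne']
      ring_nf
    rw [weight_eq, funext fun x => (hasDerivAt_japaneseBracket_rpow s x).deriv]
    exact ((isSymbolUpTo_id_japaneseBracket N).mul (ih (s - 2))).const_mul s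

lemma IsSymbolUpTo.japaneseBracket_rpow_of_le_one {w f : ℝ → ℝ} {N : ℕ} {κ : ℝ}
    (hf : IsSymbolUpTo w japaneseBracket N f) (hκ : κ ≤ 1) :
    IsSymbolUpTo w (fun x => japaneseBracket x ^ κ) N f := by
  refine hf.mono (isBigO_refl _ _) ?_ fun x => (rpow_pos_of_pos (japaneseBracket_pos x) κ).ne'
  simpa only [rpow_one] using japaneseBracket_rpow_isBigO hκ

lemma isSymbolUpTo_cos_japaneseBracket_rpow {κ : ℝ} (hκ : κ ≤ 1) (N : ℕ) :
    IsSymbolUpTo 1 (fun x => japaneseBracket x ^ κ) N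
      fun x => cos (japaneseBracket x ^ (1 - κ)) := by
  obtain ⟨phase_diff, -, phase'_symbol⟩ :=
    isSymbolUpTo_succ_iff.1 (isSymbolUpTo_japaneseBracket_rpow (1 - κ) (N + 1))
  have weight_eq : (fun x => japaneseBracket x ^ (1 - κ)) / japaneseBracket =
      (fun x => japaneseBracket x ^ κ)⁻¹ := by
    funext x
    have hx := japaneseBracket_pos x
    simp only [Pi.div_apply, Pi.inv_apply]
    rw [← rpow_sub_one hx.ne', ← rpow_neg hx.le]
    ring_nf
  rw [weight_eq] at phase'_symbol
  exact (IsSymbolUpTo.cos_comp_and_sin_comp phase_diff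
    (phase'_symbol.japaneseBracket_rpow_of_le_one hκ)).1

lemma isSymbolUpTo_japaneseBracket_rpow_mul_add_cos {κ : ℝ} (hκ : κ ≤ 1) (m c : ℝ) (N : ℕ) :
    IsSymbolUpTo (fun x => japaneseBracket x ^ m) (fun x => japaneseBracket x ^ κ) N
      fun x => japaneseBracket x ^ m * (c + cos (japaneseBracket x ^ (1 - κ))) := by
  have amplitude_symbol :=
    (isSymbolUpTo_japaneseBracket_rpow m N).japaneseBracket_rpow_of_le_one hκ
  have oscillation_symbol :=
    (IsSymbolUpTo.const c).add (isSymbolUpTo_cos_japaneseBracket_rpow hκ N)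
  simpa only [mul_one] using! amplitude_symbol.mul oscillation_symbol

end JapaneseBracket

section TimeFactor

lemma rpow_isBigO_rpow_Ioc_zero_one {s r : ℝ} (h : r ≤ s) :
    (fun t : ℝ => t ^ s) =O[𝓟 (Ioc 0 1)] fun t => t ^ r := by
  refine isBigO_principal.2 ⟨1, fun t ht => ?_⟩
  rw [norm_of_nonneg (rpow_nonneg ht.1.le s), norm_of_nonneg (rpow_nonneg ht.1.le r), one_mul]
  exact rpow_le_rpow_of_exponent_ge ht.1 ht.2 h

lemma const_add_sin_isBigO_one (c : ℝ) (θ : ℝ → ℝ) (l : Filter ℝ) :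
    (fun t => c + sin (θ t)) =O[l] fun _ => (1 : ℝ) :=
  (isBigO_const_const c one_ne_zero l).add
    (isBigO_of_le l fun t => by simpa using abs_sin_le_one (θ t))

lemma rpow_mul_const_add_sin_isBigO (c p : ℝ) (θ : ℝ → ℝ) (l : Filter ℝ) :
    (fun t => t ^ p * (c + sin (θ t))) =O[l] fun t => t ^ p := by
  simpa only [mul_one] using
    (isBigO_refl (fun t : ℝ => t ^ p) l).mul (const_add_sin_isBigO_one c θ l)

lemma deriv_rpow_mul_const_add_sin_rpow (c p r : ℝ) {t : ℝ} (ht : 0 < t) :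
    deriv (fun s => s ^ p * (c + sin (s ^ r))) t =
      p * (t ^ (p - 1) * (c + sin (t ^ r))) + r * (t ^ (p + r - 1) * cos (t ^ r)) := by
  have rpow_deriv (e : ℝ) := hasDerivAt_rpow_const (x := t) (p := e) (.inl ht.ne')
  rw [((rpow_deriv p).fun_mul ((rpow_deriv r).sin.const_add c)).deriv, add_sub_assoc, rpow_add ht]
  ring

lemma deriv_rpow_mul_const_add_sin_rpow_isBigO (c : ℝ) {p r q : ℝ} (hr : r ≤ 0)
    (hq : q ≤ p + r - 1) :
    deriv (fun s => s ^ p * (c + sin (s ^ r))) =O[𝓟 (Ioc 0 1)] fun t => t ^ q := by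
  have amplitude_term : (fun t => t ^ (p - 1) * (c + sin (t ^ r))) =O[𝓟 (Ioc 0 1)] fun t => t ^ q :=
    (rpow_mul_const_add_sin_isBigO c (p - 1) _ _).trans
      (rpow_isBigO_rpow_Ioc_zero_one (by linarith))
  have phase_term : (fun t => t ^ (p + r - 1) * cos (t ^ r)) =O[𝓟 (Ioc 0 1)] fun t => t ^ q := by
    have cos_bound : (fun t : ℝ => cos (t ^ r)) =O[𝓟 (Ioc 0 1)] fun _ => (1 : ℝ) :=
      isBigO_of_le _ fun t => by simpa using abs_cos_le_one (t ^ r)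
    simpa only [mul_one] using (rpow_isBigO_rpow_Ioc_zero_one hq).mul cos_bound
  exact ((amplitude_term.const_mul_left p).add (phase_term.const_mul_left r)).congr'
    (eventually_principal.2 fun _ ht => (deriv_rpow_mul_const_add_sin_rpow c p r ht.1).symm) .rfl

end TimeFactor

theorem stmt5_general {m κ p r q b c : ℝ} (hκ : κ ≤ 1) (hr : 0 ≤ r) (hq : p + r + 1 ≤ q)
    {a : ℝ → ℝ → ℝ}
    (ha : ∀ t > 0, ∀ x, a t x =
      japaneseBracket x ^ m * (b + cos (japaneseBracket x ^ (1 - κ)))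
        * (t ^ (-p) * (c + sin (t ^ (-r))))) (β : ℕ) :
    ∃ C, 0 < C ∧ ∀ t ∈ Ioc (0 : ℝ) 1, ∀ x,
      |iteratedDeriv β (fun y => a t y) x| ≤ C * japaneseBracket x ^ (m - κ * β) * t ^ (-p) ∧
      |iteratedDeriv β (fun y => deriv (fun s => a s y) t) x| ≤
        C * japaneseBracket x ^ (m - κ * β) * t ^ (-q) := by
  have weight_eq (x : ℝ) : |japaneseBracket x ^ m / (japaneseBracket x ^ κ) ^ β| =
      japaneseBracket x ^ (m - κ * β) := by
    have hx := japaneseBracket_pos x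
    rw [abs_of_pos (by positivity), ← rpow_mul_natCast hx.le, rpow_sub hx]
  simpa only [weight_eq] using
    (isSymbolUpTo_japaneseBracket_rpow_mul_add_cos hκ m b β).exists_singular_bound_of_separable ha
      (rpow_mul_const_add_sin_isBigO c (-p) _ _)
      (deriv_rpow_mul_const_add_sin_rpow_isBigO c (neg_nonpos.2 hr) (by linarith))

/-- Let `κ₁ ∈ [0,1]`, `κ₂ ∈ (0,1]` with `κ₁ ≤ κ₂`, and let
`a(t,x) = ⟨x⟩^{2κ₁}(2 + cos(⟨x⟩^{1−κ₂})) · t^{−1/4}(2 + sin(t^{−1/8}))`, where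
`⟨x⟩ = (1+x²)^{1/2}`. Then for every `β ∈ ℕ` there is `C_β > 0` such that on `(0,1] × ℝ`:
`|∂_x^β a(t,x)| ≤ C_β ⟨x⟩^{2κ₁−κ₂β} t^{−1/4}` and
`|∂_x^β ∂_t a(t,x)| ≤ C_β ⟨x⟩^{2κ₁−κ₂β} t^{−11/8}`; i.e. `a` satisfies the
singular-coefficient estimates with `ω(x) = ⟨x⟩^{κ₁}`, `Φ(x) = ⟨x⟩^{κ₂}`, `p = 1/4`,
`q = 11/8`. -/
theorem stmt5 (κ₁ κ₂ : ℝ) (hκ₁0 : 0 ≤ κ₁) (hκ₁1 : κ₁ ≤ 1) (hκ₂0 : 0 < κ₂) (hκ₂1 : κ₂ ≤ 1)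
    (hκ : κ₁ ≤ κ₂)
    (a : ℝ → ℝ → ℝ)
    (ha : ∀ t > (0 : ℝ), ∀ x : ℝ,
      a t x = (Real.sqrt (1 + x ^ 2)) ^ (2 * κ₁)
        * (2 + Real.cos ((Real.sqrt (1 + x ^ 2)) ^ (1 - κ₂)))
        * (t ^ (-(1 / 4 : ℝ)) * (2 + Real.sin (t ^ (-(1 / 8 : ℝ)))))) :
    ∀ β : ℕ, ∃ Cβ : ℝ, 0 < Cβ ∧ ∀ t ∈ Ioc (0 : ℝ) 1, ∀ x : ℝ,
      |iteratedDeriv β (fun y => a t y) x| ≤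
        Cβ * (Real.sqrt (1 + x ^ 2)) ^ (2 * κ₁ - κ₂ * β) * t ^ (-(1 / 4 : ℝ)) ∧
      |iteratedDeriv β (fun y => deriv (fun s => a s y) t) x| ≤
        Cβ * (Real.sqrt (1 + x ^ 2)) ^ (2 * κ₁ - κ₂ * β) * t ^ (-(11 / 8 : ℝ)) :=
  stmt5_general hκ₂1 (by norm_num) (by norm_num) ha
end

section
/- In the setting described in the context, there exists a constant C' > 0, independent of (x,ξ), such that for all (x,ξ) ∈ ℝ^n × ℝ^n one has ∫_0^T |a(t,x,ξ) − ã(t,x,ξ)| dt ≤ C' (Φ(x)⟨ξ⟩_k)^{2 − (1−p)/(q−p)}. In other words, although a − ã blows up like t^{−p} as t → 0, it is L¹-integrable in t, with integral bounded by the stated power of Φ(x)⟨ξ⟩_k. -/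
open Set Filter Real MeasureTheory

noncomputable section

/-- Partial derivative of `f : ℝⁿ → ℝ` in the `i`-th coordinate. -/
def pd {n : ℕ} (i : Fin n) (f : (Fin n → ℝ) → ℝ) : (Fin n → ℝ) → ℝ :=
  fun x => deriv (fun s => f (Function.update x i s)) (x i)

/-- Iterated partial derivative `∂^α` with respect to a multi-index `α`. -/
def mpd {n : ℕ} (α : Fin n → ℕ) (f : (Fin n → ℝ) → ℝ) : (Fin n → ℝ) → ℝ :=
  (List.finRange n).foldr (fun i g => (pd i)^[α i] g) f

/-- `∂_ξ^α ∂_x^β` applied to a symbol `b(x, ξ)`. -/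
def mpdSymb {n : ℕ} (α β : Fin n → ℕ) (b : (Fin n → ℝ) → (Fin n → ℝ) → ℝ) :
    (Fin n → ℝ) → (Fin n → ℝ) → ℝ :=
  fun x ξ => mpd α (fun ξ' => mpd β (fun x' => b x' ξ') x) ξ

/-- Length `|α| = ∑ αᵢ` of a multi-index. -/
def mlen {n : ℕ} (α : Fin n → ℕ) : ℕ := ∑ i, α i

/-- Factorial `α! = ∏ αᵢ!` of a multi-index. -/
def mfact {n : ℕ} (α : Fin n → ℕ) : ℕ := ∏ i, Nat.factorial (α i)

/-- `⟨ξ⟩_k = (k² + |ξ|²)^{1/2}`. -/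
def jxi {n : ℕ} (k : ℝ) (ξ : Fin n → ℝ) : ℝ := Real.sqrt (k ^ 2 + ∑ i, ξ i ^ 2)

/-- `⟨x⟩ = (1 + |x|²)^{1/2}`. -/
def jx {n : ℕ} (x : Fin n → ℝ) : ℝ := Real.sqrt (1 + ∑ i, x i ^ 2)

/-!
Writing `ã` as `φ w + (1 - φ) a` with `w = ω² ⟨ξ⟩_k²`, the difference `a - ã = φ (a - w)` vanishes
once `t` passes the time `R` at which `t ^ (q - p) Φ ⟨ξ⟩_k` reaches `2`. Up to `R` it is at most a
constant times `t ^ (-p) (Φ ⟨ξ⟩_k)²`, as `w ≤ T ^ p t ^ (-p) w`. Since `p < 1`, integrating gives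
`R ^ (1 - p) (Φ ⟨ξ⟩_k)²`, and `R` is a multiple of `(Φ ⟨ξ⟩_k) ^ (-1 / (q - p))`.
-/

section MultiIndex

variable {n : ℕ}

theorem mpd_zero (f : (Fin n → ℝ) → ℝ) : mpd 0 f = f := by
  simp [mpd]

theorem mpdSymb_zero_zero (b : (Fin n → ℝ) → (Fin n → ℝ) → ℝ) : mpdSymb 0 0 b = b := by
  funext x ξ
  simp only [mpdSymb, mpd_zero]

theorem mlen_zero : mlen (0 : Fin n → ℕ) = 0 := by simp [mlen]

theorem mfact_zero : mfact (0 : Fin n → ℕ) = 1 := by simp [mfact]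

theorem jxi_pos {k : ℝ} (hk : k ≠ 0) (ξ : Fin n → ℝ) : 0 < jxi k ξ :=
  Real.sqrt_pos.2 (by positivity)

end MultiIndex

section PowerSingularity

variable {p : ℝ}

theorem integrableOn_Ioc_zero_rpow_neg (hp : p < 1) (R : ℝ) :
    IntegrableOn (fun t : ℝ => t ^ (-p)) (Ioc 0 R) :=
  (intervalIntegral.intervalIntegrable_rpow' (by linarith)).1

theorem integral_Ioc_zero_rpow_neg (hp : p < 1) {R : ℝ} (hR : 0 ≤ R) :
    ∫ t in Ioc 0 R, t ^ (-p) = R ^ (1 - p) / (1 - p) := by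
  rw [← intervalIntegral.integral_of_le hR, integral_rpow (Or.inl (by linarith)),
    neg_add_eq_sub, Real.zero_rpow (by linarith), sub_zero]

variable {E : Type*} [NormedAddCommGroup E] {f : ℝ → E} {A R T : ℝ}

theorem integrableOn_of_norm_le_rpow_neg (hp : p < 1)
    (hf : AEStronglyMeasurable f (volume.restrict (Ioc 0 T)))
    (hbound : ∀ t ∈ Ioc 0 T, ‖f t‖ ≤ A * t ^ (-p)) : IntegrableOn f (Ioc 0 T) :=
  ((integrableOn_Ioc_zero_rpow_neg hp T).const_mul A).mono' hf
    (ae_restrict_of_forall_mem measurableSet_Ioc hbound)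

theorem setIntegral_norm_le_of_norm_le_rpow_neg (hp : p < 1) (hA : 0 ≤ A) (hR : 0 ≤ R)
    (hbound : ∀ t ∈ Ioc 0 T, ‖f t‖ ≤ A * t ^ (-p))
    (hvanish : ∀ t ∈ Ioc 0 T, R < t → f t = 0) :
    ∫ t in Ioc 0 T, ‖f t‖ ≤ A * (R ^ (1 - p) / (1 - p)) := by
  have hmajorant : IntegrableOn (fun t : ℝ => A * t ^ (-p)) (Ioc 0 R) :=
    (integrableOn_Ioc_zero_rpow_neg hp R).const_mul A
  have hsubset : Ioc 0 T ∩ Iic R ⊆ Ioc 0 R := fun t ht => ⟨ht.1.1, ht.2⟩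
  have hmeas : MeasurableSet (Ioc 0 T ∩ Iic R) := measurableSet_Ioc.inter measurableSet_Iic
  calc ∫ t in Ioc 0 T, ‖f t‖
      = ∫ t in Ioc 0 T ∩ Iic R, ‖f t‖ :=
        setIntegral_eq_of_subset_of_forall_sdiff_eq_zero measurableSet_Ioc inter_subset_left
          fun t ht => by rw [hvanish t ht.1 (not_le.1 fun h => ht.2 ⟨ht.1, h⟩), norm_zero]
    _ ≤ ∫ t in Ioc 0 T ∩ Iic R, A * t ^ (-p) :=
        integral_mono_of_nonneg (ae_of_all _ fun t => norm_nonneg _)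
          (hmajorant.mono_set hsubset)
          (ae_restrict_of_forall_mem hmeas fun t ht => hbound t ht.1)
    _ ≤ ∫ t in Ioc 0 R, A * t ^ (-p) :=
        setIntegral_mono_set hmajorant
          (ae_restrict_of_forall_mem measurableSet_Ioc fun t ht =>
            mul_nonneg hA (Real.rpow_nonneg ht.1.le _))
          hsubset.eventuallyLE
    _ = A * (R ^ (1 - p) / (1 - p)) := by
        rw [integral_const_mul, integral_Ioc_zero_rpow_neg hp hR]

end PowerSingularity

/-- The time at which `t ^ r * M` reaches the level `L`: an excision `φ (t ^ r * M)` whose profile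
`φ` vanishes on `[L, ∞)` is inactive from this time on. -/
def excisionTime (r L M : ℝ) : ℝ := (L / M) ^ r⁻¹

/-- The excised symbol `ã` along a fixed point of phase space, as a function of time: `w` is the
value that replaces `a` near `t = 0`, and `M` is the weight that sets the scale of the cutoff. -/
def excise (φ : ℝ → ℝ) (r M w : ℝ) (a : ℝ → ℝ) (t : ℝ) : ℝ :=
  φ (t ^ r * M) * w + (1 - φ (t ^ r * M)) * a t

section Excision

variable {r L M t : ℝ}

theorem excisionTime_nonneg (hL : 0 ≤ L) (hM : 0 ≤ M) : 0 ≤ excisionTime r L M := by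
  unfold excisionTime
  positivity

theorem excisionTime_rpow (hL : 0 ≤ L) (hM : 0 ≤ M) (s : ℝ) :
    excisionTime r L M ^ s = L ^ (s / r) / M ^ (s / r) := by
  rw [excisionTime, ← Real.rpow_mul (by positivity), inv_mul_eq_div, Real.div_rpow hL hM]

theorem le_rpow_mul_of_excisionTime_le (hr : 0 < r) (hL : 0 ≤ L) (hM : 0 < M)
    (ht : excisionTime r L M ≤ t) : L ≤ t ^ r * M := by
  have ht0 : 0 ≤ t := (excisionTime_nonneg hL hM.le).trans ht
  rwa [← div_le_iff₀ hM, ← Real.rpow_inv_le_iff_of_pos (by positivity) ht0 hr]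

theorem sub_excise (φ a : ℝ → ℝ) (r M w t : ℝ) :
    a t - excise φ r M w a t = φ (t ^ r * M) * (a t - w) := by
  unfold excise
  ring

variable {φ a : ℝ → ℝ} {w : ℝ}

theorem abs_sub_excise_le (hφ : ∀ s, |φ s| ≤ 1) : |a t - excise φ r M w a t| ≤ |a t| + |w| :=
  calc |a t - excise φ r M w a t|
      = |φ (t ^ r * M)| * |a t - w| := by rw [sub_excise, abs_mul]
    _ ≤ |a t - w| := mul_le_of_le_one_left (abs_nonneg _) (hφ _)
    _ ≤ |a t| + |w| := abs_sub _ _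

theorem sub_excise_eq_zero (hr : 0 < r) (hL : 0 ≤ L) (hM : 0 < M) (hφ : ∀ s, L ≤ s → φ s = 0)
    (ht : excisionTime r L M ≤ t) : a t - excise φ r M w a t = 0 := by
  rw [sub_excise, hφ _ (le_rpow_mul_of_excisionTime_le hr hL hM ht), zero_mul]

theorem aestronglyMeasurable_sub_excise {μ : Measure ℝ} (hφ : Measurable φ)
    (ha : AEStronglyMeasurable a μ) :
    AEStronglyMeasurable (fun t => a t - excise φ r M w a t) μ := by
  have hcutoff : Measurable fun t : ℝ => φ (t ^ r * M) := by fun_prop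
  simp only [sub_excise]
  exact hcutoff.aestronglyMeasurable.mul (ha.sub aestronglyMeasurable_const)

variable {p A B T : ℝ}

theorem abs_sub_excise_le_rpow_neg (hp : 0 ≤ p) (hφ : ∀ s, |φ s| ≤ 1) (ht : t ∈ Ioc 0 T)
    (ha : |a t| ≤ A * t ^ (-p)) (hw : |w| ≤ B) :
    |a t - excise φ r M w a t| ≤ (A + B * T ^ p) * t ^ (-p) := by
  have hB : 0 ≤ B := (abs_nonneg w).trans hw
  have hone : 1 ≤ T ^ p * t ^ (-p) := by
    rw [Real.rpow_neg ht.1.le, ← div_eq_mul_inv, one_le_div (Real.rpow_pos_of_pos ht.1 p)]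
    exact Real.rpow_le_rpow ht.1.le ht.2 hp
  calc |a t - excise φ r M w a t|
      ≤ |a t| + |w| := abs_sub_excise_le hφ
    _ ≤ A * t ^ (-p) + B * (T ^ p * t ^ (-p)) :=
        add_le_add ha (hw.trans (le_mul_of_one_le_right hB hone))
    _ = (A + B * T ^ p) * t ^ (-p) := by ring

theorem integrableOn_sub_excise (hp0 : 0 ≤ p) (hp1 : p < 1) (hφm : Measurable φ)
    (hφ : ∀ s, |φ s| ≤ 1) (ham : AEStronglyMeasurable a (volume.restrict (Ioc 0 T)))
    (ha : ∀ t ∈ Ioc 0 T, |a t| ≤ A * t ^ (-p)) :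
    IntegrableOn (fun t => a t - excise φ r M w a t) (Ioc 0 T) :=
  integrableOn_of_norm_le_rpow_neg hp1 (aestronglyMeasurable_sub_excise hφm ham)
    fun t ht => abs_sub_excise_le_rpow_neg hp0 hφ ht (ha t ht) le_rfl

theorem setIntegral_abs_sub_excise_le (hr : 0 < r) (hL : 0 ≤ L) (hM : 0 < M)
    (hp0 : 0 ≤ p) (hp1 : p < 1) (hT : 0 ≤ T) (hA : 0 ≤ A)
    (hφ : ∀ s, |φ s| ≤ 1) (hφL : ∀ s, L ≤ s → φ s = 0)
    (ha : ∀ t ∈ Ioc 0 T, |a t| ≤ A * t ^ (-p)) (hw : |w| ≤ B) :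
    ∫ t in Ioc 0 T, |a t - excise φ r M w a t| ≤
      (A + B * T ^ p) * (excisionTime r L M ^ (1 - p) / (1 - p)) := by
  have hB : 0 ≤ B := (abs_nonneg w).trans hw
  exact setIntegral_norm_le_of_norm_le_rpow_neg hp1 (by positivity)
    (excisionTime_nonneg hL hM.le)
    (fun t ht => abs_sub_excise_le_rpow_neg hp0 hφ ht (ha t ht) hw)
    fun t _ ht => sub_excise_eq_zero hr hL hM hφL ht.le

theorem setIntegral_abs_sub_excise_le_rpow {C : ℝ} (hr : 0 < r) (hL : 0 ≤ L) (hM : 0 < M)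
    (hp0 : 0 ≤ p) (hp1 : p < 1) (hT : 0 ≤ T) (hC : 0 ≤ C)
    (hφ : ∀ s, |φ s| ≤ 1) (hφL : ∀ s, L ≤ s → φ s = 0)
    (ha : ∀ t ∈ Ioc 0 T, |a t| ≤ C * M ^ 2 * t ^ (-p)) (hw : |w| ≤ M ^ 2) :
    ∫ t in Ioc 0 T, |a t - excise φ r M w a t| ≤
      (C + T ^ p) * L ^ ((1 - p) / r) / (1 - p) * M ^ (2 - (1 - p) / r) :=
  calc ∫ t in Ioc 0 T, |a t - excise φ r M w a t|
      ≤ (C * M ^ 2 + M ^ 2 * T ^ p) * (excisionTime r L M ^ (1 - p) / (1 - p)) :=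
        setIntegral_abs_sub_excise_le hr hL hM hp0 hp1 hT (by positivity) hφ hφL ha hw
    _ = (C + T ^ p) * L ^ ((1 - p) / r) / (1 - p) * M ^ (2 - (1 - p) / r) := by
        rw [excisionTime_rpow hL hM.le, Real.rpow_sub hM, Real.rpow_two]
        ring

end Excision

theorem stmt8_general {X Y : Type*} {T p q C L : ℝ} (hT : 0 < T) (hp0 : 0 ≤ p) (hp1 : p < 1)
    (hpq : p < q) (hC : 0 ≤ C) (hL : 0 < L)
    {ω Φ : X → ℝ} {J : Y → ℝ} (hΦ : ∀ x, 0 < Φ x) (hωΦ : ∀ x, |ω x| ≤ Φ x) (hJ : ∀ ξ, 0 < J ξ)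
    {a atil : ℝ → X → Y → ℝ}
    (ham : ∀ x ξ, AEStronglyMeasurable (fun t => a t x ξ) (volume.restrict (Ioc 0 T)))
    (ha : ∀ t ∈ Ioc 0 T, ∀ x ξ, |a t x ξ| ≤ C * t ^ (-p) * ω x ^ 2 * J ξ ^ 2)
    {φ : ℝ → ℝ} (hφm : Measurable φ) (hφ : ∀ s, |φ s| ≤ 1) (hφL : ∀ s, L ≤ s → φ s = 0)
    (hatil : ∀ t ∈ Ioc 0 T, ∀ x ξ, atil t x ξ =
      φ (t ^ (q - p) * (Φ x * J ξ)) * (ω x ^ 2 * J ξ ^ 2)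
        + (1 - φ (t ^ (q - p) * (Φ x * J ξ))) * a t x ξ) :
    ∃ C' : ℝ, 0 < C' ∧ ∀ x ξ,
      IntegrableOn (fun t => a t x ξ - atil t x ξ) (Ioc 0 T) ∧
        ∫ t in Ioc 0 T, |a t x ξ - atil t x ξ| ≤
          C' * (Φ x * J ξ) ^ (2 - (1 - p) / (q - p)) := by
  refine ⟨(C + T ^ p) * L ^ ((1 - p) / (q - p)) / (1 - p),
    div_pos (by positivity) (sub_pos.2 hp1), fun x ξ => ?_⟩
  have hdiff : EqOn (fun t => a t x ξ - atil t x ξ) (fun t => a t x ξ -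
      excise φ (q - p) (Φ x * J ξ) (ω x ^ 2 * J ξ ^ 2) (fun t => a t x ξ) t) (Ioc 0 T) :=
    fun t ht => congrArg (a t x ξ - ·) (hatil t ht x ξ)
  have hweight : ω x ^ 2 * J ξ ^ 2 ≤ (Φ x * J ξ) ^ 2 := by
    rw [mul_pow]
    exact mul_le_mul_of_nonneg_right (sq_le_sq.2 ((hωΦ x).trans (le_abs_self _))) (sq_nonneg _)
  have ha_weight : ∀ t ∈ Ioc 0 T, |a t x ξ| ≤ C * (Φ x * J ξ) ^ 2 * t ^ (-p) := fun t ht =>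
    calc |a t x ξ| ≤ C * t ^ (-p) * ω x ^ 2 * J ξ ^ 2 := ha t ht x ξ
      _ = C * t ^ (-p) * (ω x ^ 2 * J ξ ^ 2) := mul_assoc _ _ _
      _ ≤ C * t ^ (-p) * (Φ x * J ξ) ^ 2 :=
          mul_le_mul_of_nonneg_left hweight (mul_nonneg hC (Real.rpow_nonneg ht.1.le _))
      _ = C * (Φ x * J ξ) ^ 2 * t ^ (-p) := mul_right_comm _ _ _
  constructor
  · rw [integrableOn_congr_fun hdiff measurableSet_Ioc]
    exact integrableOn_sub_excise hp0 hp1 hφm hφ (ham x ξ) ha_weight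
  · rw [setIntegral_congr_fun measurableSet_Ioc fun t ht => congrArg abs (hdiff ht)]
    exact setIntegral_abs_sub_excise_le_rpow (sub_pos.2 hpq) hL.le (mul_pos (hΦ x) (hJ ξ))
      hp0 hp1 hT.le hC hφ hφL ha_weight ((abs_of_nonneg (by positivity)).trans_le hweight)

/-- In the setting of the singular hyperbolic Cauchy problem, there is a
constant `C' > 0`, independent of `(x,ξ)`, with
`∫_0^T |a(t,x,ξ) − ã(t,x,ξ)| dt ≤ C' (Φ(x)⟨ξ⟩_k)^{2 − (1−p)/(q−p)}` for all `(x,ξ)`: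
although `a − ã` blows up like `t^{−p}` as `t → 0`, it is `L¹`-integrable in `t` with the
stated bound. -/
theorem stmt8
    {n : ℕ} (hn : 1 ≤ n) (T k p q σ C C₀ : ℝ)
    (hT0 : 0 < T) (hT1 : T ≤ 1) (hk : 1 ≤ k)
    (hq1 : 1 < q) (hq2 : q < 3 / 2) (hp0 : 0 ≤ p) (hp12 : p < 1 / 2) (hpq : p ≤ q - 1)
    (hσ3 : 3 ≤ σ) (hσup : σ < (q - p) / (q - 1))
    -- structure functions
    (ω Φ : (Fin n → ℝ) → ℝ) (hωsm : ContDiff ℝ (⊤ : ℕ∞) ω) (hΦsm : ContDiff ℝ (⊤ : ℕ∞) Φ)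
    (hC1 : 1 ≤ C)
    (hω1 : ∀ x, 1 ≤ ω x) (hωΦ : ∀ x, ω x ≤ Φ x) (hΦx : ∀ x, Φ x ≤ C * jx x)
    (hωest : ∀ (β : Fin n → ℕ) (x : Fin n → ℝ), |mpd β ω x| ≤
      C ^ (mlen β + 1) * (mfact β : ℝ) ^ σ * ω x * jx x ^ (-(mlen β : ℝ)))
    (hΦest : ∀ (β : Fin n → ℕ) (x : Fin n → ℝ), |mpd β Φ x| ≤
      C ^ (mlen β + 1) * (mfact β : ℝ) ^ σ * Φ x * jx x ^ (-(mlen β : ℝ)))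
    -- principal symbol
    (a : ℝ → (Fin n → ℝ) → (Fin n → ℝ) → ℝ)
    (hasm : ∀ t ∈ Ioc (0 : ℝ) T,
      ContDiff ℝ (⊤ : ℕ∞) (fun P : (Fin n → ℝ) × (Fin n → ℝ) => a t P.1 P.2))
    (hatreg : ∀ (x ξ : Fin n → ℝ), ContDiffOn ℝ 1 (fun t => a t x ξ) (Ioc (0 : ℝ) T))
    (hC₀ : 0 < C₀)
    (hell : ∀ t ∈ Ioc (0 : ℝ) T, ∀ (x ξ : Fin n → ℝ),
      C₀ * ω x ^ 2 * jxi k ξ ^ 2 ≤ a t x ξ)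
    (haest : ∀ (α β : Fin n → ℕ), ∀ t ∈ Ioc (0 : ℝ) T, ∀ (x ξ : Fin n → ℝ),
      |mpdSymb α β (a t) x ξ| ≤
        C ^ (mlen α + mlen β + 1) * (mfact α : ℝ) * (mfact β : ℝ) ^ σ *
          t ^ (-p) * ω x ^ 2 * Φ x ^ (-(mlen β : ℝ)) * jxi k ξ ^ (2 - (mlen α : ℝ)))
    (hatest : ∀ (α β : Fin n → ℕ), ∀ t ∈ Ioc (0 : ℝ) T, ∀ (x ξ : Fin n → ℝ),
      |mpdSymb α β (fun y η => deriv (fun s => a s y η) t) x ξ| ≤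
        C ^ (mlen α + mlen β + 1) * (mfact α : ℝ) * (mfact β : ℝ) ^ σ *
          t ^ (-q) * ω x ^ 2 * Φ x ^ (-(mlen β : ℝ)) * jxi k ξ ^ (2 - (mlen α : ℝ)))
    -- excision
    (φ : ℝ → ℝ) (hφsm : ContDiff ℝ (⊤ : ℕ∞) φ) (hφ0 : ∀ s, 0 ≤ φ s) (hφ1 : ∀ s, φ s ≤ 1)
    (hφone : ∀ s ≤ (1 : ℝ), φ s = 1) (hφzero : ∀ s, (2 : ℝ) ≤ s → φ s = 0)
    (atil τ : ℝ → (Fin n → ℝ) → (Fin n → ℝ) → ℝ)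
    (hatil : ∀ t > (0 : ℝ), ∀ (x ξ : Fin n → ℝ), atil t x ξ =
      φ (t ^ (q - p) * (Φ x * jxi k ξ)) * (ω x ^ 2 * jxi k ξ ^ 2)
        + (1 - φ (t ^ (q - p) * (Φ x * jxi k ξ))) * a t x ξ)
    (hτ : ∀ t > (0 : ℝ), ∀ (x ξ : Fin n → ℝ), τ t x ξ = Real.sqrt (atil t x ξ))
    (δ' δ : ℝ) (hδ' : δ' = p / (q - p)) (hδ : δ = (q - p) / σ - (q - 1)) :
    ∃ C' : ℝ, 0 < C' ∧ ∀ (x ξ : Fin n → ℝ),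
      (∫ t in Ioc (0 : ℝ) T, |a t x ξ - atil t x ξ|) ≤
        C' * (Φ x * jxi k ξ) ^ (2 - (1 - p) / (q - p)) := by
  have hω0 : ∀ x, 0 < ω x := fun x => one_pos.trans_le (hω1 x)
  have ha : ∀ t ∈ Ioc 0 T, ∀ x ξ, |a t x ξ| ≤ C * t ^ (-p) * ω x ^ 2 * jxi k ξ ^ 2 :=
    fun t ht x ξ => by simpa [mpdSymb_zero_zero, mlen_zero, mfact_zero] using haest 0 0 t ht x ξ
  obtain ⟨C', hC', hbound⟩ := stmt8_general (L := 2) hT0 hp0 (by linarith)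
    (by linarith : p < q) (by linarith) two_pos
    (fun x => (hω0 x).trans_le (hωΦ x)) (fun x => (abs_of_pos (hω0 x)).trans_le (hωΦ x))
    (jxi_pos (by linarith : k ≠ 0))
    (fun x ξ => (hatreg x ξ).continuousOn.aestronglyMeasurable measurableSet_Ioc) ha
    hφsm.continuous.measurable (fun s => (abs_of_nonneg (hφ0 s)).trans_le (hφ1 s)) hφzero
    (fun t ht => hatil t ht.1)
  exact ⟨C', hC', fun x ξ => (hbound x ξ).2⟩
end
end
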